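/- Let m and n be integers with 2 ≤ m ≤ n/2, let B be the open unit ball in ℝⁿ centered at the origin, and let R ≥ 1. Then for every radial function u ∈ C₀^∞(B), setting v(x) := E₁(|x|/R)^{m/n − 1} · u(x) and C₁(p) := 1/(2^{p−1} − 1), one has I_{n,m}[u,B,R] ≥ C₁(n/m) · (n−2)^{n/m} · R_{n,m−2,n/m} · ∫_B E₁(|x|/R)^{n/m − 1} · |∇v(x)|^{n/m} / |x|^{n − n/m} dx. -/

import Mathlib

/-!
Write `p = n / m ≥ 2`. Every integral over the ball has a radial integrand, so polar coordinates
(`integral_ball_radial`) turn the claim into an inequality for the profile `f` of `u` on `(0, 1)`.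

Pointwise, everything comes from Lindqvist's sharpening of convexity (`lindqvist`),
`|s + t|^p ≥ |s|^p + p |s|^(p-2) s t + |t|^p / (2^(p-1) - 1)`. With `s` the value that `f'` (or
`h' + b h / r`) would take on the extremal profile, the cross term is, up to the Hardy term itself,
a total derivative `F'` with `F` vanishing at `0` and at `1`. Integrating
(`integral_le_of_total_deriv`) yields

* weighted Hardy inequalities for `h ↦ h' + b h / r` (`hardy_radial`), where the remainder is
  dropped: `b = n - 1` bounds `∇ w` by `Δ w`, and `b = 0` bounds `w` by `∇ w`. Composed and iterated
  starting from `Δ u`, they produce exactly the factors of `R_{n,m-2,p}` (`rellich_profile`) and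
  bound `∫ |∇^m u|^p` below by `R_{n,m-2,p} ∫ |Δ u|^p |x|^(2p-n)`; one more application with
  `b = n - 1` contributes `(n-2)^p` and leaves `∫ |f'|^p r^(p-1)`;
* the critical Hardy inequality with logarithmic weight (`critical_radial`), where the remainder is
  kept: with `f = E₁^(1-1/p) v` and `t = E₁^(1-1/p) v'` it is the ground state term of the claim.

`integral_le_of_total_deriv` also proves integrability of the smaller side, so no integral in the
chain takes a junk value.
-/

open MeasureTheory Real

/-- `E₁(t) = 1 - ln t`. -/
noncomputable def E1 (t : ℝ) : ℝ := 1 - Real.log t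

/-- `E₂(t) = ln (e E₁(t)) = 1 + ln E₁(t)`. -/
noncomputable def E2 (t : ℝ) : ℝ := 1 + Real.log (E1 t)

/-- The Euclidean Laplacian of a scalar function on `ℝⁿ`. -/
noncomputable def lap {n : ℕ} (f : EuclideanSpace ℝ (Fin n) → ℝ) :
    EuclideanSpace ℝ (Fin n) → ℝ := fun x =>
  ∑ i, fderiv ℝ (fun y => fderiv ℝ f y (EuclideanSpace.single i 1)) x (EuclideanSpace.single i 1)

/-- The constant `R_{n,m,p}`. -/
noncomputable def Rconst (n m : ℕ) (p : ℝ) : ℝ :=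
  if Even m then
    ∏ j ∈ Finset.range (m / 2),
      (((n : ℝ) * (p - 1) + 2 * j * p) / p * (((n : ℝ) - 2 * (j + 1) * p) / p)) ^ p
  else
    (((n : ℝ) - p) / p) ^ p *
      ∏ j ∈ Finset.range (m / 2),
        (((n : ℝ) * (p - 1) + p + 2 * j * p) / p * (((n : ℝ) - p - 2 * (j + 1) * p) / p)) ^ p

/-- The constant `R_{n,m} = ((n-2)(n-m)/n)^{n/m} R_{n,m-2,n/m}`. -/
noncomputable def Rnm (n m : ℕ) : ℝ :=
  (((n : ℝ) - 2) * ((n : ℝ) - m) / n) ^ ((n : ℝ) / m) * Rconst n (m - 2) ((n : ℝ) / m)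

/-- `|∇^m f|`: the norm of `Δ^{m/2} f` for even `m`, of `∇ Δ^{(m-1)/2} f` for odd `m`. -/
noncomputable def nablaPowNorm {n : ℕ} (m : ℕ) (f : EuclideanSpace ℝ (Fin n) → ℝ)
    (x : EuclideanSpace ℝ (Fin n)) : ℝ :=
  if Even m then |lap^[m / 2] f x| else ‖gradient (lap^[m / 2] f) x‖

/-- `I_{n,m}[u, Ω, R]`. -/
noncomputable def Inm (n m : ℕ) (Ω : Set (EuclideanSpace ℝ (Fin n))) (R : ℝ)
    (u : EuclideanSpace ℝ (Fin n) → ℝ) : ℝ :=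
  (∫ x in Ω, (nablaPowNorm m u x) ^ ((n : ℝ) / m)) -
    Rnm n m * ∫ x in Ω, |u x| ^ ((n : ℝ) / m) / (‖x‖ ^ n * (E1 (‖x‖ / R)) ^ ((n : ℝ) / m))

/-! ### Lindqvist's inequality -/

/-- The tangent line inequality for the convex function `|·| ^ p`, obtained from Young's
inequality. -/
lemma abs_rpow_tangent {p : ℝ} (hp : 2 ≤ p) (x y : ℝ) :
    |x| ^ p + p * (|x| ^ (p - 2) * x) * (y - x) ≤ |y| ^ p := by
  have hY := Real.young_inequality_of_nonneg (abs_nonneg y)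
    (rpow_nonneg (abs_nonneg x) (p - 1)) (Real.HolderConjugate.conjExponent (by linarith : 1 < p))
  rw [← rpow_mul (abs_nonneg x)] at hY
  have e1 : (p - 1) * p.conjExponent = p := by
    have : p - 1 ≠ 0 := by linarith
    unfold Real.conjExponent; field_simp
  rw [e1] at hY
  have hp0 : 0 < p := by linarith
  have hpm : p - 1 ≠ 0 := by linarith
  have e2 : |x| ^ p / p.conjExponent = |x| ^ p * (p - 1) / p := by
    unfold Real.conjExponent; field_simp
  rw [e2] at hY
  have e3 : |x| ^ (p - 2) * |x| = |x| ^ (p - 1) := by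
    rcases eq_or_lt_of_le (abs_nonneg x) with h | h
    · rw [← h, mul_zero, zero_rpow hpm]
    · rw [← rpow_add_one h.ne']; ring_nf
  have e4 : |x| ^ (p - 2) * x ^ 2 = |x| ^ p := by
    rw [← sq_abs, pow_two, ← mul_assoc, e3]
    rcases eq_or_lt_of_le (abs_nonneg x) with h | h
    · rw [← h, mul_zero, zero_rpow hp0.ne']
    · rw [← rpow_add_one h.ne']; ring_nf
  have h5 : |x| ^ (p - 2) * (x * y) ≤ |y| * |x| ^ (p - 1) := by
    rw [← e3]
    have : x * y ≤ |x| * |y| := by rw [← abs_mul]; exact le_abs_self _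
    nlinarith [mul_le_mul_of_nonneg_left this (rpow_nonneg (abs_nonneg x) (p - 2))]
  have h6 : p * (|y| * |x| ^ (p - 1)) ≤ |y| ^ p + |x| ^ p * (p - 1) := by
    have := mul_le_mul_of_nonneg_left hY hp0.le
    have e : p * (|y| ^ p / p + |x| ^ p * (p - 1) / p) = |y| ^ p + |x| ^ p * (p - 1) := by
      field_simp
    rwa [e] at this
  nlinarith [mul_le_mul_of_nonneg_left h5 hp0.le]

/-- Clarkson's inequality for real numbers. -/
lemma clarkson_real {p : ℝ} (hp : 2 ≤ p) (x y : ℝ) :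
    2 * |(x + y) / 2| ^ p + 2 * |(x - y) / 2| ^ p ≤ |x| ^ p + |y| ^ p := by
  have key : ∀ t : ℝ, |t| ^ p = (t ^ 2) ^ (p / 2) := by
    intro t
    rw [← sq_abs, ← rpow_natCast, ← rpow_mul (abs_nonneg t)]; congr 1; push_cast; ring
  simp only [key]
  have hp2 : 1 ≤ p / 2 := by linarith
  have h1 : (((x + y) / 2) ^ 2) ^ (p / 2) + (((x - y) / 2) ^ 2) ^ (p / 2)
      ≤ (((x + y) / 2) ^ 2 + ((x - y) / 2) ^ 2) ^ (p / 2) := by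
    have := NNReal.add_rpow_le_rpow_add (p := p / 2) ⟨_, sq_nonneg ((x + y) / 2)⟩
      ⟨_, sq_nonneg ((x - y) / 2)⟩ hp2
    exact_mod_cast this
  have h2 := (convexOn_rpow hp2).2 (Set.mem_Ici.2 (sq_nonneg x)) (Set.mem_Ici.2 (sq_nonneg y))
    (by norm_num : (0:ℝ) ≤ 1/2) (by norm_num : (0:ℝ) ≤ 1/2) (by norm_num)
  simp only [smul_eq_mul] at h2
  have e : ((x + y) / 2) ^ 2 + ((x - y) / 2) ^ 2 = 1 / 2 * x ^ 2 + 1 / 2 * y ^ 2 := by ring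
  rw [e] at h1
  linarith

/-- Lindqvist's inequality. Convexity together with Clarkson's inequality at the midpoint improves a
remainder constant `c` to `2 ^ (1 - p) * (1 + c)`; the fixed point of this map is
`1 / (2 ^ (p - 1) - 1)`. -/
lemma lindqvist {p : ℝ} (hp : 2 ≤ p) (a b : ℝ) :
    |a| ^ p + p * (|a| ^ (p - 2) * a) * b + 1 / (2 ^ (p - 1) - 1) * |b| ^ p ≤ |a + b| ^ p := by
  set C : ℝ := 1 / (2 ^ (p - 1) - 1) with hC
  set q : ℝ := 2 ^ (1 - p) with hq
  have hq0 : 0 < q := by positivity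
  have hqh : q ≤ 1 / 2 := by
    have : q ≤ (2:ℝ) ^ (-1 : ℝ) := rpow_le_rpow_of_exponent_le (by norm_num) (by linarith)
    rw [rpow_neg_one] at this; linarith
  have hCq : C = q / (1 - q) := by
    have : (2:ℝ) ^ (p - 1) = q⁻¹ := by rw [hq, ← rpow_neg (by norm_num)]; congr 1; ring
    rw [hC, this]
    have h1 : q⁻¹ - 1 ≠ 0 := by
      have : 1 < q⁻¹ := (one_lt_inv₀ hq0).2 (by linarith)
      linarith
    have h2 : 1 - q ≠ 0 := by linarith
    field_simp
  have hfix : q * (1 + C) = C := by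
    have h2 : 1 - q ≠ 0 := by linarith
    rw [hCq]; field_simp; ring
  have step : ∀ k : ℕ, ∀ a b : ℝ,
      |a| ^ p + p * (|a| ^ (p - 2) * a) * b + C * (1 - q ^ k) * |b| ^ p ≤ |a + b| ^ p := by
    intro k
    induction k with
    | zero => intro a b; have := abs_rpow_tangent hp a (a + b); simp at this ⊢; linarith
    | succ k ih =>
      intro a b
      have h1 := ih a (b / 2)
      have h2 := clarkson_real hp a (a + b)
      have e1 : (a + (a + b)) / 2 = a + b / 2 := by ring
      have e2 : (a - (a + b)) / 2 = -(b / 2) := by ring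
      have e3 : 2 * |b / 2| ^ p = q * |b| ^ p := by
        rw [abs_div, div_rpow (abs_nonneg _) (abs_nonneg _), abs_of_pos (by norm_num : (0:ℝ) < 2),
          hq, rpow_sub (by norm_num), rpow_one]; ring
      rw [e1, e2, abs_neg] at h2
      have e4 : C * (1 - q ^ (k + 1)) * |b| ^ p
          = C * (1 - q ^ k) * (2 * |b / 2| ^ p) + 2 * |b / 2| ^ p := by
        rw [e3, pow_succ]
        linear_combination (-|b| ^ p) * hfix
      rw [e4]; linarith
  have hlim : Filter.Tendsto (fun k : ℕ => |a| ^ p + p * (|a| ^ (p - 2) * a) * b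
      + C * (1 - q ^ k) * |b| ^ p) Filter.atTop
      (nhds (|a| ^ p + p * (|a| ^ (p - 2) * a) * b + C * (1 - 0) * |b| ^ p)) := by
    have := tendsto_pow_atTop_nhds_zero_of_lt_one hq0.le (by linarith : q < 1)
    exact (((tendsto_const_nhds.sub this).const_mul C).mul_const _).const_add _
  have := le_of_tendsto' hlim (fun k => step k a b)
  simpa using this

/-! ### Integration modulo a total derivative -/

/-- Integration of a pointwise inequality modulo a total derivative `F'` on `(0, 1]`, with `F`
vanishing at both ends. Integrability of the smaller side is part of the conclusion. -/
lemma integral_le_of_total_deriv {A G F F' : ℝ → ℝ}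
    (hA : IntervalIntegrable A volume 0 1) (hG0 : ∀ r ∈ Set.Ioc (0:ℝ) 1, 0 ≤ G r)
    (hG : ContinuousOn G (Set.Ioc 0 1))
    (hF : ∀ r ∈ Set.Ioc (0:ℝ) 1, HasDerivAt F (F' r) r)
    (hF0 : Filter.Tendsto F (nhdsWithin 0 (Set.Ioi 0)) (nhds 0)) (hF1 : F 1 = 0)
    (hle : ∀ r ∈ Set.Ioo (0:ℝ) 1, G r + F' r ≤ A r) :
    IntervalIntegrable G volume 0 1 ∧ ∫ r in (0:ℝ)..1, G r ≤ ∫ r in (0:ℝ)..1, A r := by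
  have hAI : IntegrableOn A (Set.uIcc 0 1) := by
    rw [Set.uIcc_of_le zero_le_one, integrableOn_Icc_iff_integrableOn_Ioc]
    exact (intervalIntegrable_iff_integrableOn_Ioc_of_le zero_le_one).1 hA
  have hGi : ∀ e : ℝ, 0 < e → IntegrableOn G (Set.Icc e 1) := fun e he =>
    (hG.mono (fun x hx => ⟨he.trans_le hx.1, hx.2⟩)).integrableOn_Icc
  have hAi : ∀ e : ℝ, 0 < e → IntegrableOn A (Set.Icc e 1) := fun e he =>
    hAI.mono_set (by rw [Set.uIcc_of_le zero_le_one]; exact Set.Icc_subset_Icc he.le le_rfl)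
  have key : ∀ e ∈ Set.Ioo (0:ℝ) 1, ∫ r in e..1, G r ≤ (∫ r in e..1, A r) + F e := by
    intro e he
    have h := intervalIntegral.sub_le_integral_of_hasDeriv_right_of_le (g := F) (g' := F')
      (φ := fun r => A r - G r) he.2.le
      (fun x hx => (hF x ⟨he.1.trans_le hx.1, hx.2⟩).continuousAt.continuousWithinAt)
      (fun x hx => (hF x ⟨he.1.trans hx.1, hx.2.le⟩).hasDerivWithinAt)
      ((hAi e he.1).sub (hGi e he.1))
      (fun x hx => by linarith [hle x ⟨he.1.trans hx.1, hx.2⟩])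
    rw [intervalIntegral.integral_sub, hF1] at h
    · linarith
    · exact (intervalIntegrable_iff_integrableOn_Icc_of_le he.2.le).2 (hAi e he.1)
    · exact (intervalIntegrable_iff_integrableOn_Icc_of_le he.2.le).2 (hGi e he.1)
  have hev : ∀ᶠ e in nhdsWithin (0:ℝ) (Set.Ioi 0), e ∈ Set.Ioo (0:ℝ) 1 :=
    Ioo_mem_nhdsGT zero_lt_one
  have limprim : ∀ H : ℝ → ℝ, IntegrableOn H (Set.uIcc 0 1) →
      Filter.Tendsto (fun e => ∫ r in e..1, H r) (nhdsWithin 0 (Set.Ioi 0))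
        (nhds (∫ r in (0:ℝ)..1, H r)) := by
    intro H hH
    have h := (intervalIntegral.continuousOn_primitive_interval_left hH) 0 (by simp)
    refine h.mono_left ?_
    rw [← nhdsWithin_Ioo_eq_nhdsGT (zero_lt_one : (0:ℝ) < 1)]
    exact nhdsWithin_mono _ (by rw [Set.uIcc_of_le zero_le_one]; exact Set.Ioo_subset_Icc_self)
  have hAF : Filter.Tendsto (fun e => (∫ r in e..1, A r) + F e) (nhdsWithin 0 (Set.Ioi 0))
      (nhds (∫ r in (0:ℝ)..1, A r)) := by
    simpa using (limprim A hAI).add hF0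
  have hGint : IntegrableOn G (Set.Ioc 0 1) := by
    let a : ℕ → ℝ := fun k => 1 / ((k:ℝ) + 2)
    have ha : ∀ k, a k ∈ Set.Ioo (0:ℝ) 1 := fun k => by
      have : (0:ℝ) ≤ k := k.cast_nonneg
      exact ⟨by positivity, by rw [div_lt_one (by positivity)]; linarith⟩
    have hat : Filter.Tendsto a Filter.atTop (nhds 0) := by
      have := (tendsto_one_div_add_atTop_nhds_zero_nat (𝕜 := ℝ)).comp (Filter.tendsto_add_atTop_nat 1)
      refine this.congr (fun k => ?_)
      simp only [Function.comp, a]; push_cast; ring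
    have hat' : Filter.Tendsto a Filter.atTop (nhdsWithin 0 (Set.Ioi 0)) :=
      tendsto_nhdsWithin_iff.2 ⟨hat, .of_forall fun k => (ha k).1⟩
    refine integrableOn_Ioc_of_intervalIntegral_norm_bounded_left (a := a) (l := Filter.atTop)
      (I := (∫ r in (0:ℝ)..1, A r) + 1) (fun k => (hGi _ (ha k).1).mono_set Set.Ioc_subset_Icc_self)
      hat ?_
    have := (hAF.comp hat').eventually (Iio_mem_nhds (lt_add_one _))
    filter_upwards [this] with k hk
    have h2 := key _ (ha k)
    rw [intervalIntegral.integral_of_le (ha k).2.le] at h2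
    have : ∫ x in Set.Ioc (a k) 1, ‖G x‖ = ∫ x in Set.Ioc (a k) 1, G x := by
      refine setIntegral_congr_fun measurableSet_Ioc fun x hx => ?_
      exact norm_of_nonneg (hG0 x ⟨(ha k).1.trans hx.1, hx.2⟩)
    rw [this]
    exact h2.trans (le_of_lt hk)
  refine ⟨(intervalIntegrable_iff_integrableOn_Ioc_of_le zero_le_one).2 hGint, ?_⟩
  refine le_of_tendsto_of_tendsto (limprim G ?_) hAF (hev.mono key)
  rw [Set.uIcc_of_le zero_le_one, integrableOn_Icc_iff_integrableOn_Ioc]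
  exact hGint

lemma integral_congr_Ioc_zero_one {F G : ℝ → ℝ} (h : ∀ r ∈ Set.Ioc (0:ℝ) 1, F r = G r) :
    ∫ r in (0:ℝ)..1, F r = ∫ r in (0:ℝ)..1, G r := by
  rw [intervalIntegral.integral_of_le zero_le_one, intervalIntegral.integral_of_le zero_le_one]
  exact setIntegral_congr_fun measurableSet_Ioc h

/-! ### One-dimensional Hardy inequalities -/

lemma abs_rpow_sub_two_mul_self {p : ℝ} (hp0 : 0 < p) (t : ℝ) :
    |t| ^ (p - 2) * t * t = |t| ^ p := by
  rcases eq_or_ne t 0 with h | h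
  · simp [h, zero_rpow hp0.ne']
  · rw [mul_assoc, ← pow_two, ← sq_abs, ← rpow_natCast, ← rpow_add (abs_pos.2 h)]
    congr 1; push_cast; ring

/-- One-dimensional weighted Hardy inequality for the operator `h ↦ h' + b h / r`. -/
lemma hardy_radial {p b β : ℝ} (hp : 2 ≤ p) (hβ : 0 < β + 1 - p) {h h' : ℝ → ℝ}
    (hc : Continuous h) (hd : ∀ r ∈ Set.Ioc (0:ℝ) 1, HasDerivAt h (h' r) r) (h1 : h 1 = 0)
    (hA : IntervalIntegrable (fun r => |h' r + b * h r / r| ^ p * r ^ β) volume 0 1) :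
    IntervalIntegrable (fun r => |h r| ^ p * r ^ (β - p)) volume 0 1 ∧
    |(p * b - (β + 1 - p)) / p| ^ p * ∫ r in (0:ℝ)..1, |h r| ^ p * r ^ (β - p) ≤
      ∫ r in (0:ℝ)..1, |h' r + b * h r / r| ^ p * r ^ β := by
  have hp0 : 0 < p := by linarith
  obtain ⟨κ, hκ⟩ : ∃ κ, κ = (p * b - (β + 1 - p)) / p := ⟨_, rfl⟩
  have hκ' : p * κ = p * b - (β + 1 - p) := by rw [hκ]; field_simp
  rw [← hκ]
  have hGc : ContinuousOn (fun r => |h r| ^ p * r ^ (β - p)) (Set.Ioc (0:ℝ) 1) := by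
    refine ContinuousOn.mul ?_ ?_
    · exact (hc.abs.rpow_const fun x => Or.inr hp0.le).continuousOn
    · exact continuousOn_id.rpow_const fun x hx => Or.inl hx.1.ne'
  have sq := abs_rpow_sub_two_mul_self hp0
  set c := |κ| ^ (p - 2) * κ with hcdef
  have main := integral_le_of_total_deriv
    (A := fun r => |h' r + b * h r / r| ^ p * r ^ β)
    (G := fun r => |κ| ^ p * (|h r| ^ p * r ^ (β - p)))
    (F := fun r => c * (r ^ (β + 1 - p) * |h r| ^ p))
    (F' := fun r => c * ((β + 1 - p) * r ^ (β - p) * |h r| ^ p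
      + r ^ (β + 1 - p) * (p * |h r| ^ (p - 2) * h r * h' r)))
    hA (fun r hr => by have := hr.1; positivity) (hGc.const_mul _) ?_ ?_ ?_ ?_
  · refine ⟨?_, ?_⟩
    · by_cases hk : |κ| ^ p = 0
      · -- for `κ = 0` integrability comes from `β - p > -1` instead
        have : IntervalIntegrable (fun r : ℝ => r ^ (β - p)) volume 0 1 :=
          intervalIntegral.intervalIntegrable_rpow' (by linarith)
        exact this.continuousOn_mul
          (hc.abs.rpow_const fun x => Or.inr hp0.le).continuousOn
      · have := main.1.const_mul (|κ| ^ p)⁻¹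
        refine this.congr (fun r _ => ?_)
        field_simp
    · have := main.2
      rwa [intervalIntegral.integral_const_mul] at this
  · intro r hr
    have e1 : HasDerivAt (fun r : ℝ => r ^ (β + 1 - p)) ((β + 1 - p) * r ^ (β - p)) r := by
      have := hasDerivAt_rpow_const (x := r) (p := β + 1 - p) (Or.inl hr.1.ne')
      convert this using 2; ring_nf
    have e2 : HasDerivAt (fun r => |h r| ^ p) (p * |h r| ^ (p - 2) * h r * h' r) r :=
      (hasDerivAt_abs_rpow (h r) (by linarith)).comp r (hd r hr)
    exact (e1.mul e2).const_mul c
  · have : ContinuousAt (fun r => c * (r ^ (β + 1 - p) * |h r| ^ p)) 0 := by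
      refine continuousAt_const.mul (ContinuousAt.mul ?_ ?_)
      · exact continuousAt_id.rpow_const (Or.inr hβ.le)
      · exact (hc.abs.rpow_const fun x => Or.inr hp0.le).continuousAt
    have h2 := this.tendsto
    simp only [zero_rpow hβ.ne', zero_mul, mul_zero] at h2
    exact h2.mono_left nhdsWithin_le_nhds
  · simp [h1, zero_rpow hp0.ne']
  · intro r hr
    have hr0 := hr.1
    -- `h' = (κ - b) h / r` holds for the extremal profile `r ^ (κ - b)`
    have L := lindqvist hp (κ * h r / r) (h' r + b * h r / r - κ * h r / r)
    rw [add_sub_cancel] at L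
    have hrem : 0 ≤ 1 / ((2:ℝ) ^ (p - 1) - 1) * |h' r + b * h r / r - κ * h r / r| ^ p := by
      have : (1:ℝ) ≤ 2 ^ (p - 1) := one_le_rpow (by norm_num) (by linarith)
      have : (0:ℝ) ≤ 2 ^ (p - 1) - 1 := by linarith
      positivity
    have L2 := mul_le_mul_of_nonneg_right (le_trans (le_add_of_nonneg_right hrem) L)
      (rpow_nonneg hr0.le β)
    refine le_trans (le_of_eq ?_) L2
    have w1 : r ^ (β + 1 - p) = r ^ (β - p) * r := by
      rw [← rpow_add_one hr0.ne']; ring_nf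
    have w2 : r ^ β = r ^ (β - p) * r ^ (p - 2) * r ^ 2 := by
      rw [← rpow_natCast, ← rpow_add hr0, ← rpow_add hr0]; congr 1; push_cast; ring
    have hne : r ^ (p - 2) ≠ 0 := (rpow_pos_of_pos hr0 _).ne'
    rw [← sq (κ * h r / r), ← sq κ, ← sq (h r), w1, w2, abs_div, abs_mul,
      div_rpow (by positivity) (by positivity), mul_rpow (by positivity) (by positivity),
      abs_of_pos hr0, hcdef]
    field_simp
    linear_combination (|κ| ^ (p - 2) * κ * |h r| ^ (p - 2) * h r ^ 2) * hκ'

lemma E1_div_pos {R r : ℝ} (hR : 1 ≤ R) (hr : r ∈ Set.Ioc (0:ℝ) 1) : 0 < E1 (r / R) := by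
  have hR0 : 0 < R := by linarith
  have : Real.log (r / R) ≤ 0 :=
    Real.log_nonpos (div_nonneg hr.1.le hR0.le) (by rw [div_le_one hR0]; linarith [hr.2])
  unfold E1; linarith

lemma hasDerivAt_E1_div {R r : ℝ} (hR0 : 0 < R) (hr0 : 0 < r) :
    HasDerivAt (fun r => E1 (r / R)) (-(1 / r)) r := by
  have := (((hasDerivAt_id r).div_const R).log (div_pos hr0 hR0).ne').const_sub 1
  have e : -(1 / r) = -(1 / R / (id r / R)) := by simp only [id]; field_simp
  rw [e]; exact this

/-- The critical one-dimensional Hardy inequality with logarithmic weight and ground state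
remainder. The function `E1 (r / R) ^ (1 / p - 1) * (f' + (p - 1) / p * f / (E1 (r / R) * r))` is
the derivative of the ground state transform `E1 (r / R) ^ (1 / p - 1) * f`. -/
lemma critical_radial {p R : ℝ} (hp : 2 ≤ p) (hR : 1 ≤ R) {f f' : ℝ → ℝ}
    (hc : Continuous f) (hc' : Continuous f') (hd : ∀ r, HasDerivAt f (f' r) r) (h1 : f 1 = 0)
    (hA : IntervalIntegrable (fun r => |f' r| ^ p * r ^ (p - 1)) volume 0 1) :
    ((p - 1) / p) ^ p * (∫ r in (0:ℝ)..1, |f r| ^ p / (r * E1 (r / R) ^ p)) +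
      1 / (2 ^ (p - 1) - 1) * (∫ r in (0:ℝ)..1, E1 (r / R) ^ (p - 1) *
        |E1 (r / R) ^ (1 / p - 1) * (f' r + (p - 1) / p * f r / (E1 (r / R) * r))| ^ p
          * r ^ (p - 1)) ≤
      ∫ r in (0:ℝ)..1, |f' r| ^ p * r ^ (p - 1) := by
  have hp0 : 0 < p := by linarith
  have hR0 : 0 < R := by linarith
  obtain ⟨γ, hγ⟩ : ∃ γ, γ = (p - 1) / p := ⟨_, rfl⟩
  have hγ' : p * γ = p - 1 := by rw [hγ]; field_simp
  have hγ0 : 0 < γ := by rw [hγ]; exact div_pos (by linarith) hp0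
  rw [← hγ]
  have hE : ∀ r ∈ Set.Ioc (0:ℝ) 1, 0 < E1 (r / R) := fun r hr => E1_div_pos hR hr
  have hEd : ∀ r ∈ Set.Ioc (0:ℝ) 1, HasDerivAt (fun r => E1 (r / R)) (-(1 / r)) r :=
    fun r hr => hasDerivAt_E1_div hR0 hr.1
  have hEc : ContinuousOn (fun r => E1 (r / R)) (Set.Ioc (0:ℝ) 1) :=
    fun r hr => (hEd r hr).continuousAt.continuousWithinAt
  have hEpc : ∀ s : ℝ, ContinuousOn (fun r => E1 (r / R) ^ s) (Set.Ioc (0:ℝ) 1) := fun s =>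
    hEc.rpow_const fun r hr => Or.inl (hE r hr).ne'
  have hfp : Continuous fun r => |f r| ^ p := hc.abs.rpow_const fun x => Or.inr hp0.le
  have sq := abs_rpow_sub_two_mul_self hp0
  have hC0 : (0:ℝ) < 1 / (2 ^ (p - 1) - 1) := by
    have : (1:ℝ) < 2 ^ (p - 1) := one_lt_rpow (by norm_num) (by linarith)
    have : (0:ℝ) < 2 ^ (p - 1) - 1 := by linarith
    positivity
  set C : ℝ := 1 / (2 ^ (p - 1) - 1) with hC
  obtain ⟨vd, hvd⟩ : ∃ vd : ℝ → ℝ, vd = fun r => E1 (r / R) ^ (1 / p - 1) *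
    (f' r + γ * f r / (E1 (r / R) * r)) := ⟨_, rfl⟩
  have hvdc : ContinuousOn vd (Set.Ioc (0:ℝ) 1) := by
    rw [hvd]
    refine (hEpc _).mul (hc'.continuousOn.add ?_)
    exact (hc.const_mul γ).continuousOn.div (hEc.mul continuousOn_id)
      fun r hr => (mul_pos (hE r hr) hr.1).ne'
  set G1 : ℝ → ℝ := fun r => γ ^ p * (|f r| ^ p / (r * E1 (r / R) ^ p)) with hG1
  set G2 : ℝ → ℝ := fun r => C * (E1 (r / R) ^ (p - 1) * |vd r| ^ p * r ^ (p - 1)) with hG2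
  have hG1c : ContinuousOn G1 (Set.Ioc 0 1) := by
    refine ContinuousOn.const_mul (hfp.continuousOn.div (continuousOn_id.mul (hEpc p)) ?_) _
    intro r hr
    exact (mul_pos hr.1 (rpow_pos_of_pos (hE r hr) _)).ne'
  have hG2c : ContinuousOn G2 (Set.Ioc 0 1) := by
    refine ContinuousOn.const_mul (((hEpc _).mul ?_).mul ?_) _
    · exact hvdc.abs.rpow_const fun x _ => Or.inr hp0.le
    · exact continuousOn_id.rpow_const fun x hx => Or.inl hx.1.ne'
  have hG10 : ∀ r ∈ Set.Ioc (0:ℝ) 1, 0 ≤ G1 r := fun r hr => by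
    have := hE r hr; have := hr.1; simp only [hG1]; positivity
  have hG20 : ∀ r ∈ Set.Ioc (0:ℝ) 1, 0 ≤ G2 r := fun r hr => by
    have := hE r hr; have := hr.1; simp only [hG2]; positivity
  set F : ℝ → ℝ := fun r => -(γ ^ (p - 1)) * (E1 (r / R) ^ (1 - p) * |f r| ^ p) with hF
  set F' : ℝ → ℝ := fun r => -(γ ^ (p - 1)) * (-(1 / r) * (1 - p) * E1 (r / R) ^ (1 - p - 1)
    * |f r| ^ p + E1 (r / R) ^ (1 - p) * (p * |f r| ^ (p - 2) * f r * f' r)) with hF'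
  have hFd : ∀ r ∈ Set.Ioc (0:ℝ) 1, HasDerivAt F (F' r) r := by
    intro r hr
    have e2 : HasDerivAt (fun r => |f r| ^ p) (p * |f r| ^ (p - 2) * f r * f' r) r :=
      (hasDerivAt_abs_rpow (f r) (by linarith)).comp r (hd r)
    exact (((hEd r hr).rpow_const (p := 1 - p) (Or.inl (hE r hr).ne')).mul e2).const_mul _
  have hF0 : Filter.Tendsto F (nhdsWithin 0 (Set.Ioi 0)) (nhds 0) := by
    have t1 : Filter.Tendsto (fun r => E1 (r / R)) (nhdsWithin 0 (Set.Ioi 0)) Filter.atTop := by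
      have a1 : Filter.Tendsto (fun r : ℝ => r / R) (nhdsWithin 0 (Set.Ioi 0))
          (nhdsWithin 0 (Set.Ioi 0)) := by
        refine tendsto_nhdsWithin_iff.2 ⟨?_, ?_⟩
        · have : Filter.Tendsto (fun r : ℝ => r / R) (nhds 0) (nhds (0 / R)) :=
            Filter.tendsto_id.div_const R
          rw [zero_div] at this
          exact this.mono_left nhdsWithin_le_nhds
        · filter_upwards [self_mem_nhdsWithin] with r hr
          exact div_pos hr hR0
      have a2 := Real.tendsto_log_nhdsGT_zero.comp a1
      have a3 := Filter.tendsto_atTop_add_const_left _ (1:ℝ) (Filter.tendsto_neg_atBot_atTop.comp a2)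
      refine a3.congr fun r => ?_
      simp [E1, sub_eq_add_neg]
    have t2 : Filter.Tendsto (fun r => E1 (r / R) ^ (1 - p)) (nhdsWithin 0 (Set.Ioi 0)) (nhds 0) := by
      have := (tendsto_rpow_neg_atTop (y := p - 1) (by linarith)).comp t1
      refine this.congr fun r => ?_
      simp
    have t3 : Filter.Tendsto (fun r => |f r| ^ p) (nhdsWithin 0 (Set.Ioi 0)) (nhds (|f 0| ^ p)) :=
      (hfp.tendsto 0).mono_left nhdsWithin_le_nhds
    simpa only [zero_mul, mul_zero] using (t2.mul t3).const_mul (-(γ ^ (p - 1)))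
  have hF1 : F 1 = 0 := by simp [hF, h1, zero_rpow hp0.ne']
  have hle : ∀ r ∈ Set.Ioo (0:ℝ) 1, (G1 r + G2 r) + F' r ≤ |f' r| ^ p * r ^ (p - 1) := by
    intro r hr
    have hr0 := hr.1
    have hEr := hE r ⟨hr.1, hr.2.le⟩
    set E := E1 (r / R) with hEdef
    -- the second summand is `E ^ (1 - 1 / p) * v'`, with `v` the ground state transform of `f`
    have L := lindqvist hp (-(γ * f r / (E * r))) (f' r + γ * f r / (E * r))
    rw [neg_add_eq_sub, add_sub_cancel_right] at L
    have L2 := mul_le_mul_of_nonneg_right L (rpow_nonneg hr0.le (p - 1))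
    refine le_trans (le_of_eq ?_) L2
    have g2 : E ^ (p - 1) * |vd r| ^ p = |f' r + γ * f r / (E * r)| ^ p := by
      simp only [hvd]
      rw [← hEdef, abs_mul, mul_rpow (abs_nonneg _) (abs_nonneg _),
        abs_of_pos (rpow_pos_of_pos hEr _), ← rpow_mul hEr.le, ← mul_assoc, ← rpow_add hEr]
      have : p - 1 + (1 / p - 1) * p = 0 := by field_simp; ring
      rw [this, rpow_zero, one_mul]
    have x1 : γ ^ p = γ ^ (p - 2) * γ ^ 2 := by
      rw [← rpow_natCast, ← rpow_add hγ0]; congr 1; push_cast; ring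
    have x2 : γ ^ (p - 1) = γ ^ (p - 2) * γ := by
      rw [← rpow_add_one hγ0.ne']; congr 1; ring
    have x3 : r ^ (p - 1) = r ^ (p - 2) * r := by
      rw [← rpow_add_one hr0.ne']; congr 1; ring
    have x4 : E ^ p = E ^ (p - 2) * E ^ 2 := by
      rw [← rpow_natCast, ← rpow_add hEr]; congr 1; push_cast; ring
    have x5 : E ^ (1 - p) = (E ^ (p - 2) * E)⁻¹ := by
      rw [← rpow_add_one hEr.ne', ← rpow_neg hEr.le]; congr 1; ring
    have x6 : E ^ (1 - p - 1) = (E ^ (p - 2) * E ^ 2)⁻¹ := by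
      rw [← x4, ← rpow_neg hEr.le]; congr 1; ring
    have hn1 : r ^ (p - 2) ≠ 0 := (rpow_pos_of_pos hr0 _).ne'
    have hn2 : E ^ (p - 2) ≠ 0 := (rpow_pos_of_pos hEr _).ne'
    simp only [hG1, hG2, hF', ← hEdef]
    rw [g2, ← sq (-(γ * f r / (E * r))), ← sq (f r), x1, x2, x3, x4, x5, x6, abs_neg, abs_div, abs_mul, abs_mul,
      div_rpow (by positivity) (by positivity), mul_rpow (by positivity) (by positivity),
      mul_rpow (by positivity) (by positivity), abs_of_pos hr0, abs_of_pos hEr, abs_of_pos hγ0]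
    field_simp
    linear_combination (γ ^ (p - 2) * γ * |f r| ^ (p - 2) * f r ^ 2) * hγ'
  have m1 := integral_le_of_total_deriv hA hG10 hG1c hFd hF0 hF1
    (fun r hr => by linarith [hle r hr, hG20 r ⟨hr.1, hr.2.le⟩])
  have m2 := integral_le_of_total_deriv hA hG20 hG2c hFd hF0 hF1
    (fun r hr => by linarith [hle r hr, hG10 r ⟨hr.1, hr.2.le⟩])
  have m := integral_le_of_total_deriv (G := fun r => G1 r + G2 r) hA
    (fun r hr => add_nonneg (hG10 r hr) (hG20 r hr)) (hG1c.add hG2c) hFd hF0 hF1 hle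
  have m3 := m.2
  rw [intervalIntegral.integral_add m1.1 m2.1] at m3
  simp only [hG1, hG2, intervalIntegral.integral_const_mul] at m3
  simpa only [hvd] using m3

/-! ### Radial functions and their profiles -/

/-- A smooth radial function whose support is a subset of the open unit ball. -/
structure RadialTest {n : ℕ} (w : EuclideanSpace ℝ (Fin n) → ℝ) : Prop where
  smooth : ContDiff ℝ (⊤ : ℕ∞) w
  supp : tsupport w ⊆ Metric.ball 0 1
  radial : ∃ g : ℝ → ℝ, ∀ x, w x = g ‖x‖

/-- The restriction of `w` to the line `ℝ e`, i.e. the radial profile of `w` if `e` is a unit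
vector and `w` is radial. -/
def prof {n : ℕ} (e : EuclideanSpace ℝ (Fin n)) (w : EuclideanSpace ℝ (Fin n) → ℝ) (r : ℝ) : ℝ :=
  w (r • e)

lemma hasFDerivAt_radial {n : ℕ} {f : ℝ → ℝ} {d : ℝ} {x : EuclideanSpace ℝ (Fin n)} (hx : x ≠ 0)
    (hf : HasDerivAt f d ‖x‖) :
    HasFDerivAt (fun y => f ‖y‖) ((d / ‖x‖) • innerSL ℝ x) x := by
  have hpos : 0 < ‖x‖ := norm_pos_iff.2 hx
  have h1 : HasFDerivAt (fun y : EuclideanSpace ℝ (Fin n) => ‖y‖) (‖x‖⁻¹ • innerSL ℝ x) x := by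
    have h := (hasStrictFDerivAt_norm_sq x).hasFDerivAt.sqrt (by positivity)
    have e : (fun y : EuclideanSpace ℝ (Fin n) => √(‖y‖ ^ 2)) = fun y => ‖y‖ := by
      funext y; exact sqrt_sq (norm_nonneg y)
    rw [e, sqrt_sq (norm_nonneg x)] at h
    have e' : (‖x‖⁻¹ • innerSL ℝ x : EuclideanSpace ℝ (Fin n) →L[ℝ] ℝ)
        = (1 / (2 * ‖x‖)) • 2 • innerSL ℝ x := by
      ext y
      simp only [smul_apply, smul_eq_mul, nsmul_eq_mul]
      push_cast
      field_simp
    rw [e']; exact h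
  have h2 := hf.comp_hasFDerivAt x h1
  rw [smul_smul] at h2
  exact h2

lemma norm_gradient_radial {n : ℕ} {w : EuclideanSpace ℝ (Fin n) → ℝ} {f : ℝ → ℝ} {d : ℝ}
    {x : EuclideanSpace ℝ (Fin n)} (hx : x ≠ 0) (hw : ∀ y, w y = f ‖y‖)
    (hf : HasDerivAt f d ‖x‖) : ‖gradient w x‖ = |d| := by
  have hpos : 0 < ‖x‖ := norm_pos_iff.2 hx
  obtain rfl : w = fun y => f ‖y‖ := funext hw
  rw [gradient, LinearIsometryEquiv.norm_map, (hasFDerivAt_radial hx hf).fderiv, norm_smul,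
    innerSL_apply_norm, norm_div, norm_norm, Real.norm_eq_abs]
  field_simp

lemma lap_radial {n : ℕ} {w : EuclideanSpace ℝ (Fin n) → ℝ} {f f' : ℝ → ℝ} {d : ℝ}
    {x : EuclideanSpace ℝ (Fin n)} (hx : x ≠ 0) (hw : ∀ y, w y = f ‖y‖)
    (hf : ∀ r, HasDerivAt f (f' r) r) (hf' : HasDerivAt f' d ‖x‖) :
    lap w x = d + (n - 1) * f' ‖x‖ / ‖x‖ := by
  have hpos : 0 < ‖x‖ := norm_pos_iff.2 hx
  obtain rfl : w = fun y => f ‖y‖ := funext hw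
  have hq : HasDerivAt (fun r => f' r / r) ((d * ‖x‖ - f' ‖x‖ * 1) / ‖x‖ ^ 2) ‖x‖ :=
    hf'.div (hasDerivAt_id _) hpos.ne'
  have hterm : ∀ i : Fin n,
      fderiv ℝ (fun y => fderiv ℝ (fun y => f ‖y‖) y (EuclideanSpace.single i 1)) x
        (EuclideanSpace.single i 1)
      = f' ‖x‖ / ‖x‖ + (d * ‖x‖ - f' ‖x‖) / ‖x‖ ^ 3 * x i ^ 2 := by
    intro i
    have hev : (fun y => fderiv ℝ (fun y => f ‖y‖) y (EuclideanSpace.single i 1))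
        =ᶠ[nhds x] fun y => (f' ‖y‖ / ‖y‖) * y i := by
      filter_upwards [isOpen_ne.mem_nhds hx] with y hy
      rw [(hasFDerivAt_radial hy (hf _)).fderiv]
      simp [EuclideanSpace.inner_single_right]
    rw [hev.fderiv_eq]
    have hpi : HasFDerivAt (fun y : EuclideanSpace ℝ (Fin n) => y i)
        (EuclideanSpace.proj i : EuclideanSpace ℝ (Fin n) →L[ℝ] ℝ) x :=
      (EuclideanSpace.proj i : EuclideanSpace ℝ (Fin n) →L[ℝ] ℝ).hasFDerivAt
    have hprod : HasFDerivAt (fun y : EuclideanSpace ℝ (Fin n) => f' ‖y‖ / ‖y‖ * y i) _ x :=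
      (hasFDerivAt_radial hx hq).mul hpi
    rw [hprod.fderiv]
    simp [EuclideanSpace.inner_single_right]
    field_simp
  unfold lap
  rw [Finset.sum_congr rfl fun i _ => hterm i, Finset.sum_add_distrib, ← Finset.mul_sum,
    ← EuclideanSpace.real_norm_sq_eq]
  simp
  field_simp
  ring

section profile

variable {n : ℕ} {w : EuclideanSpace ℝ (Fin n) → ℝ} {e : EuclideanSpace ℝ (Fin n)}

lemma RadialTest.eq_prof (h : RadialTest w) (he : ‖e‖ = 1) (x : EuclideanSpace ℝ (Fin n)) :
    w x = prof e w ‖x‖ := by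
  obtain ⟨g, hg⟩ := h.radial
  rw [prof, hg, hg, norm_smul, he]; simp

lemma RadialTest.contDiff_prof (h : RadialTest w) : ContDiff ℝ (⊤ : ℕ∞) (prof e w) :=
  h.smooth.comp (contDiff_id.smul contDiff_const)

lemma RadialTest.continuous_prof (h : RadialTest w) : Continuous (prof e w) :=
  h.contDiff_prof.continuous

lemma RadialTest.hasDerivAt_prof (h : RadialTest w) (r : ℝ) :
    HasDerivAt (prof e w) (deriv (prof e w) r) r :=
  (h.contDiff_prof.differentiable (by simp)).differentiableAt.hasDerivAt

lemma RadialTest.contDiff_deriv_prof (h : RadialTest w) :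
    ContDiff ℝ (⊤ : ℕ∞) (deriv (prof e w)) :=
  (contDiff_infty_iff_deriv.1 h.contDiff_prof).2

lemma RadialTest.hasDerivAt_deriv_prof (h : RadialTest w) (r : ℝ) :
    HasDerivAt (deriv (prof e w)) (deriv (deriv (prof e w)) r) r :=
  (h.contDiff_deriv_prof.differentiable (by simp)).differentiableAt.hasDerivAt

lemma RadialTest.prof_eventuallyEq (h : RadialTest w) (he : ‖e‖ = 1) :
    prof e w =ᶠ[nhds 1] fun _ => 0 := by
  have h1 : (1:ℝ) • e ∉ tsupport w := fun hm => by simpa [he] using h.supp hm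
  have h2 := notMem_tsupport_iff_eventuallyEq.1 h1
  have hc : ContinuousAt (fun r : ℝ => r • e) 1 := by fun_prop
  exact hc.eventually h2

lemma RadialTest.prof_one (h : RadialTest w) (he : ‖e‖ = 1) : prof e w 1 = 0 :=
  (h.prof_eventuallyEq he).eq_of_nhds

lemma RadialTest.deriv_prof_one (h : RadialTest w) (he : ‖e‖ = 1) : deriv (prof e w) 1 = 0 := by
  rw [(h.prof_eventuallyEq he).deriv_eq]; simp

lemma RadialTest.norm_gradient (h : RadialTest w) (he : ‖e‖ = 1) {x : EuclideanSpace ℝ (Fin n)}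
    (hx : x ≠ 0) : ‖gradient w x‖ = |deriv (prof e w) ‖x‖| :=
  norm_gradient_radial hx (h.eq_prof he) (h.hasDerivAt_prof _)

lemma RadialTest.lap_eq (h : RadialTest w) (he : ‖e‖ = 1) {x : EuclideanSpace ℝ (Fin n)}
    (hx : x ≠ 0) : lap w x =
      deriv (deriv (prof e w)) ‖x‖ + (n - 1) * deriv (prof e w) ‖x‖ / ‖x‖ :=
  lap_radial hx (h.eq_prof he) h.hasDerivAt_prof (h.hasDerivAt_deriv_prof _)

lemma RadialTest.prof_lap (h : RadialTest w) (he : ‖e‖ = 1) {r : ℝ} (hr : 0 < r) :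
    prof e (lap w) r = deriv (deriv (prof e w)) r + (n - 1) * deriv (prof e w) r / r := by
  have hn : ‖r • e‖ = r := by rw [norm_smul, he, mul_one, Real.norm_of_nonneg hr.le]
  have hx : r • e ≠ 0 := by rw [← norm_pos_iff, hn]; exact hr
  rw [prof, h.lap_eq he hx, hn]

lemma RadialTest.lap (h : RadialTest w) (he : ‖e‖ = 1) : RadialTest (lap w) where
  smooth := by
    unfold _root_.lap
    refine ContDiff.sum fun i _ => ?_
    have h1 : ContDiff ℝ (⊤ : ℕ∞) fun y => fderiv ℝ w y (EuclideanSpace.single i 1) :=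
      (h.smooth.fderiv_right (by simp)).clm_apply contDiff_const
    exact (h1.fderiv_right (by simp)).clm_apply contDiff_const
  supp := by
    refine subset_trans (closure_minimal ?_ (isClosed_tsupport w)) h.supp
    intro x hx
    by_contra hxs
    refine hx (Finset.sum_eq_zero fun i _ => ?_)
    have h1 : x ∉ tsupport fun y => fderiv ℝ w y (EuclideanSpace.single i 1) :=
      fun hm => hxs (tsupport_fderiv_apply_subset ℝ _ hm)
    rw [fderiv_of_notMem_tsupport (𝕜 := ℝ) h1]; simp
  radial := by
    classical
    refine ⟨fun r => if r = 0 then _root_.lap w 0 else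
      deriv (deriv (prof e w)) r + (n - 1) * deriv (prof e w) r / r, fun x => ?_⟩
    by_cases hx : x = 0
    · simp [hx]
    · simp only [norm_eq_zero, hx, if_false]
      exact h.lap_eq he hx

lemma RadialTest.lap_iterate (he : ‖e‖ = 1) (k : ℕ) :
    ∀ {w : EuclideanSpace ℝ (Fin n) → ℝ}, RadialTest w → RadialTest (_root_.lap^[k] w) := by
  induction k with
  | zero => intro w h; exact h
  | succ k ih => intro w h; exact ih (h.lap he)

end profile

/-- Polar coordinates on the unit ball for a function that is radial off the origin. -/
lemma integral_ball_radial {n : ℕ} (hn : 0 < n) {Φ : EuclideanSpace ℝ (Fin n) → ℝ} {φ : ℝ → ℝ}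
    (h : ∀ x, x ≠ 0 → ‖x‖ < 1 → Φ x = φ ‖x‖) :
    ∫ x in Metric.ball (0 : EuclideanSpace ℝ (Fin n)) 1, Φ x =
      n * volume.real (Metric.ball (0 : EuclideanSpace ℝ (Fin n)) 1) *
        ∫ r in (0:ℝ)..1, r ^ (n - 1) * φ r := by
  have : Nonempty (Fin n) := ⟨⟨0, hn⟩⟩
  have h1 : ∫ x in Metric.ball (0 : EuclideanSpace ℝ (Fin n)) 1, Φ x
      = ∫ x : EuclideanSpace ℝ (Fin n), (Set.Iio 1).indicator φ ‖x‖ := by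
    rw [← integral_indicator measurableSet_ball]
    refine integral_congr_ae ?_
    have : ∀ᵐ x : EuclideanSpace ℝ (Fin n), x ≠ 0 := by
      simp [ae_iff]
    filter_upwards [this] with x hx
    by_cases hx1 : ‖x‖ < 1
    · simp [Set.indicator, hx1, h x hx hx1]
    · simp [Set.indicator, hx1]
  rw [h1, integral_fun_norm_addHaar, finrank_euclideanSpace_fin, nsmul_eq_mul, smul_eq_mul,
    mul_assoc]
  congr 2
  rw [intervalIntegral.integral_of_le zero_le_one, integral_Ioc_eq_integral_Ioo,
    ← integral_indicator measurableSet_Ioi, ← integral_indicator measurableSet_Ioo]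
  congr 1
  funext r
  by_cases h0 : 0 < r <;> by_cases h1 : r < 1 <;> simp [Set.indicator, h0, h1]

/-! ### Rellich inequalities for radial functions -/

section rellich

variable {n : ℕ} {w : EuclideanSpace ℝ (Fin n) → ℝ} {e : EuclideanSpace ℝ (Fin n)} {p s : ℝ}

/-- Weighted Hardy inequality controlling the radial derivative by the Laplacian, from
`Δ w = r ^ (1 - n) * (r ^ (n - 1) * w')'`. -/
lemma RadialTest.hardy_lap (h : RadialTest w) (he : ‖e‖ = 1) (hp : 2 ≤ p) (hs : 0 ≤ s)
    (hn : 0 < (n:ℝ) - s - p) :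
    IntervalIntegrable (fun r => |deriv (prof e w) r| ^ p * r ^ ((n:ℝ) - 1 - s - p)) volume 0 1 ∧
    (((n:ℝ) * (p - 1) + s) / p) ^ p *
        ∫ r in (0:ℝ)..1, |deriv (prof e w) r| ^ p * r ^ ((n:ℝ) - 1 - s - p) ≤
      ∫ r in (0:ℝ)..1, |prof e (_root_.lap w) r| ^ p * r ^ ((n:ℝ) - 1 - s) := by
  have hp0 : 0 < p := by linarith
  have hcongr : ∀ r ∈ Set.Ioc (0:ℝ) 1, |prof e (_root_.lap w) r| ^ p * r ^ ((n:ℝ) - 1 - s)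
      = |deriv (deriv (prof e w)) r + ((n:ℝ) - 1) * deriv (prof e w) r / r| ^ p
        * r ^ ((n:ℝ) - 1 - s) := by
    intro r hr
    rw [h.prof_lap he hr.1]
  have hA : IntervalIntegrable (fun r => |prof e (_root_.lap w) r| ^ p * r ^ ((n:ℝ) - 1 - s))
      volume 0 1 :=
    (intervalIntegral.intervalIntegrable_rpow' (by linarith)).continuousOn_mul
      ((h.lap he).continuous_prof.abs.rpow_const fun x => Or.inr hp0.le).continuousOn
  have H := hardy_radial (b := (n:ℝ) - 1) (β := (n:ℝ) - 1 - s) hp (by linarith)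
    h.contDiff_deriv_prof.continuous (fun r _ => h.hasDerivAt_deriv_prof r)
    (h.deriv_prof_one he) (hA.congr (by rwa [Set.uIoc_of_le zero_le_one]))
  have eκ : (p * ((n:ℝ) - 1) - ((n:ℝ) - 1 - s + 1 - p)) / p = ((n:ℝ) * (p - 1) + s) / p := by
    congr 1; ring
  have hpos : 0 ≤ ((n:ℝ) * (p - 1) + s) / p := by
    have : (0:ℝ) ≤ n * (p - 1) := mul_nonneg n.cast_nonneg (by linarith)
    positivity
  rw [eκ, abs_of_nonneg hpos] at H
  rw [integral_congr_Ioc_zero_one hcongr]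
  exact H

/-- Weighted Hardy inequality controlling a radial function by its radial derivative. -/
lemma RadialTest.hardy_deriv (h : RadialTest w) (he : ‖e‖ = 1) (hp : 2 ≤ p)
    (hn : 0 < (n:ℝ) - s - p)
    (hA : IntervalIntegrable (fun r => |deriv (prof e w) r| ^ p * r ^ ((n:ℝ) - 1 - s))
      volume 0 1) :
    (((n:ℝ) - s - p) / p) ^ p *
        ∫ r in (0:ℝ)..1, |prof e w r| ^ p * r ^ ((n:ℝ) - 1 - s - p) ≤
      ∫ r in (0:ℝ)..1, |deriv (prof e w) r| ^ p * r ^ ((n:ℝ) - 1 - s) := by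
  have hp0 : 0 < p := by linarith
  have H := (hardy_radial (b := 0) (β := (n:ℝ) - 1 - s) hp (by linarith)
    h.continuous_prof (fun r _ => h.hasDerivAt_prof r) (h.prof_one he)
    (by simpa only [zero_mul, zero_div, add_zero] using hA)).2
  have eκ : (p * 0 - ((n:ℝ) - 1 - s + 1 - p)) / p = -(((n:ℝ) - s - p) / p) := by
    rw [← neg_div]; congr 1; ring
  rw [eκ, abs_neg, abs_of_pos (div_pos hn hp0)] at H
  simpa only [zero_mul, zero_div, add_zero] using H

lemma RadialTest.rellich_step (h : RadialTest w) (he : ‖e‖ = 1) (hp : 2 ≤ p) (hs : 0 ≤ s)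
    (hn : 0 < (n:ℝ) - s - 2 * p) :
    (((n:ℝ) * (p - 1) + s) / p * (((n:ℝ) - s - 2 * p) / p)) ^ p *
        ∫ r in (0:ℝ)..1, |prof e w r| ^ p * r ^ ((n:ℝ) - 1 - (s + 2 * p)) ≤
      ∫ r in (0:ℝ)..1, |prof e (_root_.lap w) r| ^ p * r ^ ((n:ℝ) - 1 - s) := by
  have hp0 : 0 < p := by linarith
  obtain ⟨hI, h1⟩ := h.hardy_lap he hp hs (by linarith)
  have e1 : (n:ℝ) - 1 - s - p = (n:ℝ) - 1 - (s + p) := by ring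
  rw [e1] at hI h1
  have h2 := h.hardy_deriv he hp (s := s + p) (by linarith) hI
  have e2 : (n:ℝ) - 1 - (s + p) - p = (n:ℝ) - 1 - (s + 2 * p) := by ring
  have e3 : (n:ℝ) - (s + p) - p = (n:ℝ) - s - 2 * p := by ring
  rw [e2, e3] at h2
  have hpos : 0 ≤ ((n:ℝ) * (p - 1) + s) / p := by
    have : (0:ℝ) ≤ n * (p - 1) := mul_nonneg n.cast_nonneg (by linarith)
    positivity
  rw [mul_rpow hpos (div_pos hn hp0).le, mul_assoc]
  exact (mul_le_mul_of_nonneg_left h2 (rpow_nonneg hpos p)).trans h1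

/-- The factors are written as in `Rconst`. -/
lemma rellich_iterate (he : ‖e‖ = 1) (hp : 2 ≤ p) (hs : 0 ≤ s) (k : ℕ) :
    ∀ {w : EuclideanSpace ℝ (Fin n) → ℝ}, RadialTest w → 0 < (n:ℝ) - s - 2 * k * p →
    (∏ j ∈ Finset.range k, (((n:ℝ) * (p - 1) + s + 2 * j * p) / p *
        (((n:ℝ) - s - 2 * (j + 1) * p) / p)) ^ p) *
        ∫ r in (0:ℝ)..1, |prof e w r| ^ p * r ^ ((n:ℝ) - 1 - (s + 2 * k * p)) ≤
      ∫ r in (0:ℝ)..1, |prof e (_root_.lap^[k] w) r| ^ p * r ^ ((n:ℝ) - 1 - s) := by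
  induction k with
  | zero => intro w h _; simp
  | succ k ih =>
    intro w h hn
    have hp0 : 0 < p := by linarith
    push_cast at hn
    have hk : (0:ℝ) ≤ 2 * k * p := by positivity
    have h1 := h.rellich_step he hp (s := s + 2 * k * p) (by positivity) (by linarith)
    have h2 := ih (h.lap he) (by linarith)
    have hP : 0 ≤ ∏ j ∈ Finset.range k, (((n:ℝ) * (p - 1) + s + 2 * j * p) / p *
        (((n:ℝ) - s - 2 * (j + 1) * p) / p)) ^ p := by
      refine Finset.prod_nonneg fun j hj => rpow_nonneg (mul_nonneg ?_ ?_) _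
      · have : (0:ℝ) ≤ n * (p - 1) := mul_nonneg n.cast_nonneg (by linarith)
        positivity
      · have : ((j:ℝ) + 1) * p ≤ k * p := by
          have : (j:ℝ) + 1 ≤ k := by exact_mod_cast Finset.mem_range.1 hj
          gcongr
        refine div_nonneg ?_ hp0.le
        linarith
    refine le_trans ?_ h2
    rw [Finset.prod_range_succ, mul_assoc]
    refine mul_le_mul_of_nonneg_left (le_of_eq_of_le ?_ h1) hP
    push_cast
    congr 1
    · congr 2; · ring
      congr 1; ring
    · congr 1; funext r; congr 2; ring

end rellich

/-- Iterated Rellich inequality of order `m - 2` for `Δ u`, reduced to radial profiles. The last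
component supplies the sign needed to multiply by `Rconst`. -/
lemma rellich_profile {n m : ℕ} (hm : 2 ≤ m) {p : ℝ} (hp : 2 ≤ p) (hmp : (m:ℝ) * p = n)
    {e : EuclideanSpace ℝ (Fin n)} (he : ‖e‖ = 1) {u : EuclideanSpace ℝ (Fin n) → ℝ}
    (h : RadialTest u) :
    ∃ φ : ℝ → ℝ, (∀ x, x ≠ 0 → nablaPowNorm m u x = φ ‖x‖) ∧
      Rconst n (m - 2) p * (∫ r in (0:ℝ)..1, |prof e (lap u) r| ^ p * r ^ (2 * p - 1)) ≤
        (∫ r in (0:ℝ)..1, φ r ^ p * r ^ ((n:ℝ) - 1)) ∧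
      0 ≤ Rconst n (m - 2) p := by
  have hp0 : 0 < p := by linarith
  obtain ⟨k, rfl | rfl⟩ : ∃ k, m = 2 * k + 2 ∨ m = 2 * k + 3 := by
    rcases Nat.even_or_odd' m with ⟨j, hj | hj⟩
    · exact ⟨j - 1, Or.inl (by omega)⟩
    · exact ⟨j - 1, Or.inr (by omega)⟩
  · have d1 : (2 * k + 2) / 2 = k + 1 := by omega
    have d2 : 2 * k + 2 - 2 = 2 * k := by omega
    have d3 : 2 * k / 2 = k := by omega
    have ev : Even (2 * k + 2) := ⟨k + 1, by ring⟩
    have ev' : Even (2 * k) := ⟨k, by ring⟩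
    push_cast at hmp
    have hlap := h.lap he
    refine ⟨fun r => |prof e (lap^[k] (lap u)) r|, fun x hx => ?_, ?_, ?_⟩
    · unfold nablaPowNorm
      rw [if_pos ev, d1, Function.iterate_succ_apply,
        (RadialTest.lap_iterate he k hlap).eq_prof he x]
    · have H := rellich_iterate he hp le_rfl k hlap (by linarith)
      have e1 : (n:ℝ) - 1 - (0 + 2 * k * p) = 2 * p - 1 := by linarith
      simp only [e1, sub_zero, add_zero] at H
      rw [d2]; unfold Rconst; rw [if_pos ev', d3]
      exact H
    · rw [d2]; unfold Rconst; rw [if_pos ev', d3]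
      refine Finset.prod_nonneg fun j hj => rpow_nonneg (mul_nonneg ?_ ?_) _
      · have : (0:ℝ) ≤ n * (p - 1) := mul_nonneg n.cast_nonneg (by linarith)
        positivity
      · have : ((j:ℝ) + 1) * p ≤ k * p := by
          have : (j:ℝ) + 1 ≤ k := by exact_mod_cast Finset.mem_range.1 hj
          gcongr
        refine div_nonneg ?_ hp0.le
        linarith
  · have d1 : (2 * k + 3) / 2 = k + 1 := by omega
    have d2 : 2 * k + 3 - 2 = 2 * k + 1 := by omega
    have d3 : (2 * k + 1) / 2 = k := by omega
    have ev : ¬ Even (2 * k + 3) := by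
      rw [Nat.not_even_iff_odd]; exact ⟨k + 1, by ring⟩
    have ev' : ¬ Even (2 * k + 1) := by
      rw [Nat.not_even_iff_odd]; exact ⟨k, by ring⟩
    push_cast at hmp
    have hk : (0:ℝ) ≤ 2 * k * p := by positivity
    have hnp : 0 < (n:ℝ) - p := by linarith
    have hlap := h.lap he
    have hit := RadialTest.lap_iterate he k hlap
    have hP : 0 ≤ (((n:ℝ) - p) / p) ^ p := rpow_nonneg (div_pos hnp hp0).le _
    refine ⟨fun r => |deriv (prof e (lap^[k] (lap u))) r|, fun x hx => ?_, ?_, ?_⟩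
    · unfold nablaPowNorm
      rw [if_neg ev, d1, Function.iterate_succ_apply, hit.norm_gradient he hx]
    · have H := rellich_iterate he hp hp0.le k hlap (by linarith)
      have hI : IntervalIntegrable (fun r => |deriv (prof e (lap^[k] (lap u))) r| ^ p
          * r ^ ((n:ℝ) - 1 - 0)) volume 0 1 :=
        (intervalIntegral.intervalIntegrable_rpow' (by linarith)).continuousOn_mul
          (hit.contDiff_deriv_prof.continuous.abs.rpow_const fun x => Or.inr hp0.le).continuousOn
      have H2 := hit.hardy_deriv he hp (s := 0) (by linarith) hI
      have e1 : (n:ℝ) - 1 - (p + 2 * k * p) = 2 * p - 1 := by linarith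
      simp only [e1] at H
      simp only [sub_zero] at H2
      rw [d2]; unfold Rconst; rw [if_neg ev', d3, mul_assoc]
      exact (mul_le_mul_of_nonneg_left H hP).trans H2
    · rw [d2]; unfold Rconst; rw [if_neg ev', d3]
      refine mul_nonneg hP (Finset.prod_nonneg fun j hj => rpow_nonneg (mul_nonneg ?_ ?_) _)
      · have : (0:ℝ) ≤ n * (p - 1) := mul_nonneg n.cast_nonneg (by linarith)
        positivity
      · have : ((j:ℝ) + 1) * p ≤ k * p := by
          have : (j:ℝ) + 1 ≤ k := by exact_mod_cast Finset.mem_range.1 hj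
          gcongr
        refine div_nonneg ?_ hp0.le
        linarith

/-! ### The ground state estimate -/

/-- Ground state estimate for radial functions (Proposition 5). -/
theorem stmt16 (n m : ℕ) (hm : 2 ≤ m) (hmn : 2 * m ≤ n) (R : ℝ) (hR : 1 ≤ R)
    (u : EuclideanSpace ℝ (Fin n) → ℝ) (hsmooth : ContDiff ℝ (⊤ : ℕ∞) u)
    (hcpt : HasCompactSupport u) (hsupp : tsupport u ⊆ Metric.ball 0 1)
    (hrad : ∃ g : ℝ → ℝ, ∀ x, u x = g ‖x‖) :
    1 / (2 ^ ((n : ℝ) / m - 1) - 1) * ((n : ℝ) - 2) ^ ((n : ℝ) / m) *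
        Rconst n (m - 2) ((n : ℝ) / m) *
        ∫ x in Metric.ball (0 : EuclideanSpace ℝ (Fin n)) 1,
          (E1 (‖x‖ / R)) ^ ((n : ℝ) / m - 1) *
            ‖gradient (fun y => (E1 (‖y‖ / R)) ^ ((m : ℝ) / n - 1) * u y) x‖ ^ ((n : ℝ) / m) /
              ‖x‖ ^ ((n : ℝ) - (n : ℝ) / m) ≤
      Inm n m (Metric.ball 0 1) R u := by
  have hm0 : (0:ℝ) < m := by exact_mod_cast (by omega : 0 < m)
  have hn0 : 0 < n := by omega
  have hn0' : (0:ℝ) < n := by exact_mod_cast hn0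
  have hn4 : (4:ℝ) ≤ n := by exact_mod_cast (by omega : 4 ≤ n)
  have hm2 : (2:ℝ) ≤ m := by exact_mod_cast hm
  have hmn' : (2:ℝ) * m ≤ n := by exact_mod_cast hmn
  have hR0 : 0 < R := by linarith
  obtain ⟨p, hpdef⟩ : ∃ p : ℝ, p = (n:ℝ) / m := ⟨_, rfl⟩
  have hp : 2 ≤ p := by rw [hpdef, le_div_iff₀ hm0]; exact hmn'
  have hp0 : 0 < p := by linarith
  have hmp : (m:ℝ) * p = n := by rw [hpdef]; field_simp
  have hinv : (m:ℝ) / n = 1 / p := by rw [← hmp]; field_simp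
  unfold Inm Rnm
  rw [← hpdef, hinv]
  have hu : RadialTest u := ⟨hsmooth, hsupp, hrad⟩
  obtain ⟨e, he⟩ : ∃ e : EuclideanSpace ℝ (Fin n), ‖e‖ = 1 :=
    ⟨EuclideanSpace.single ⟨0, hn0⟩ 1, by simp⟩
  obtain ⟨φ, hφ, hRell, hRc⟩ := rellich_profile hm hp hmp he hu
  set f := prof e u with hf
  set c : ℝ := n * volume.real (Metric.ball (0 : EuclideanSpace ℝ (Fin n)) 1) with hc
  have hc0 : 0 ≤ c := by positivity
  have hpow : ∀ r : ℝ, 0 < r → r ^ (n - 1) = r ^ ((n:ℝ) - 1) := by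
    intro r _
    rw [← rpow_natCast, Nat.cast_sub (by omega), Nat.cast_one]
  -- the three integrals in polar coordinates
  have I1 : ∫ x in Metric.ball (0 : EuclideanSpace ℝ (Fin n)) 1, nablaPowNorm m u x ^ p
      = c * ∫ r in (0:ℝ)..1, φ r ^ p * r ^ ((n:ℝ) - 1) := by
    rw [integral_ball_radial hn0 (φ := fun r => φ r ^ p) (fun x hx _ => by rw [hφ x hx])]
    congr 1
    refine integral_congr_Ioc_zero_one fun r hr => ?_
    rw [hpow r hr.1, mul_comm]
  have I2 : ∫ x in Metric.ball (0 : EuclideanSpace ℝ (Fin n)) 1,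
        |u x| ^ p / (‖x‖ ^ n * E1 (‖x‖ / R) ^ p)
      = c * ∫ r in (0:ℝ)..1, |f r| ^ p / (r * E1 (r / R) ^ p) := by
    rw [integral_ball_radial hn0 (φ := fun r => |f r| ^ p / (r ^ n * E1 (r / R) ^ p))
      (fun x hx _ => by rw [hu.eq_prof he x])]
    congr 1
    refine integral_congr_Ioc_zero_one fun r hr => ?_
    have hr0 := hr.1.ne'
    have : r ^ n = r ^ (n - 1) * r := by rw [← pow_succ]; congr 1; omega
    rw [this, mul_assoc, ← mul_div_assoc, mul_div_mul_left _ _ (pow_ne_zero _ hr0)]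
  have I3 : ∫ x in Metric.ball (0 : EuclideanSpace ℝ (Fin n)) 1,
        E1 (‖x‖ / R) ^ (p - 1) *
          ‖gradient (fun y => E1 (‖y‖ / R) ^ (1 / p - 1) * u y) x‖ ^ p / ‖x‖ ^ ((n:ℝ) - p)
      = c * ∫ r in (0:ℝ)..1, E1 (r / R) ^ (p - 1) *
        |E1 (r / R) ^ (1 / p - 1) * (deriv f r + (p - 1) / p * f r / (E1 (r / R) * r))| ^ p
          * r ^ (p - 1) := by
    rw [integral_ball_radial hn0 (φ := fun r => E1 (r / R) ^ (p - 1) *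
        |E1 (r / R) ^ (1 / p - 1) * (deriv f r + (p - 1) / p * f r / (E1 (r / R) * r))| ^ p
          / r ^ ((n:ℝ) - p)) ?_]
    · congr 1
      refine integral_congr_Ioc_zero_one fun r hr => ?_
      have : r ^ (p - 1) = r ^ ((n:ℝ) - 1) / r ^ ((n:ℝ) - p) := by
        rw [← rpow_sub hr.1]; congr 1; ring
      rw [hpow r hr.1, this]
      ring
    · intro x hx hx1
      have hr : ‖x‖ ∈ Set.Ioc (0:ℝ) 1 := ⟨norm_pos_iff.2 hx, hx1.le⟩
      have hE := E1_div_pos hR hr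
      have hd := ((hasDerivAt_E1_div hR0 hr.1).rpow_const (p := 1 / p - 1)
        (Or.inl hE.ne')).mul (hu.hasDerivAt_prof (e := e) ‖x‖)
      rw [norm_gradient_radial hx (f := fun r => E1 (r / R) ^ (1 / p - 1) * f r)
        (fun y => by rw [hu.eq_prof he y]) hd]
      have e1 : E1 (‖x‖ / R) ^ (1 / p - 1 - 1) = E1 (‖x‖ / R) ^ (1 / p - 1) / E1 (‖x‖ / R) := by
        rw [rpow_sub_one hE.ne']
      have hr0 := hr.1.ne'
      have hE0 := hE.ne'
      rw [e1]
      congr 4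
      rw [← hf]
      field_simp
      ring
  rw [I1, I2, I3]
  -- the case `s = n - 2p` of the Hardy inequality for the Laplacian
  have hs : 0 ≤ (n:ℝ) - 2 * p := by nlinarith
  obtain ⟨hI, hH⟩ := hu.hardy_lap he hp hs (by linarith)
  have x1 : (n:ℝ) - 1 - ((n:ℝ) - 2 * p) = 2 * p - 1 := by ring
  have x2 : 2 * p - 1 - p = p - 1 := by ring
  have x3 : ((n:ℝ) * (p - 1) + ((n:ℝ) - 2 * p)) / p = (n:ℝ) - 2 := by field_simp; ring
  rw [x1, x2] at hI
  rw [x1, x2, x3] at hH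
  have hcrit := critical_radial hp hR hu.continuous_prof hu.contDiff_deriv_prof.continuous
    (fun r => hu.hasDerivAt_prof r) (hu.prof_one he) hI
  rw [← hf] at hcrit hH
  have hsplit : (((n:ℝ) - 2) * ((n:ℝ) - m) / n) ^ p
      = ((n:ℝ) - 2) ^ p * ((p - 1) / p) ^ p := by
    rw [← mul_rpow (by linarith) (div_nonneg (by linarith) hp0.le)]
    congr 1
    rw [← hmp]; field_simp
  rw [hsplit]
  have hK : 0 ≤ ((n:ℝ) - 2) ^ p := rpow_nonneg (by linarith) _
  have F1 := (mul_le_mul_of_nonneg_left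
    ((mul_le_mul_of_nonneg_left hcrit hK).trans hH) hRc).trans hRell
  have F2 := mul_le_mul_of_nonneg_left F1 hc0
  linarith
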